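/- Upper bound on the spectral gap of the Dyck random transposition chain: for every n ≥ 2, the function f : 𝓓(n) → ℝ with f(S) = the number of even indices in {1,…,2n} \ S is non-constant and satisfies 𝓔(f,f) ≤ (4/n) · Var_π(f); consequently the spectral gap λ = inf over non-constant g of 𝓔(g,g)/Var_π(g) satisfies λ ≤ 4/n. -/

import Mathlib

open scoped Classical

/-- The set of Dyck paths of length `2n`, identified with their up-step sets:
`n`-element subsets `S` of `{1,…,2n}` with `2·|S ∩ {1,…,k}| ≥ k` for all `k`. -/
noncomputable def dyck (n : ℕ) : Finset (Finset ℕ) :=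
  (Finset.Icc 1 (2 * n)).powerset.filter fun S =>
    S.card = n ∧ ∀ k ∈ Finset.Icc 1 (2 * n), k ≤ 2 * (S ∩ Finset.Icc 1 k).card

/-- Off-diagonal transition probability of the Dyck random transposition chain:
`1/(2n²)` if `y` is obtained from `x` by exchanging one up-step with one
down-step, and `0` otherwise. -/
noncomputable def dyckStep (n : ℕ) (x y : Finset ℕ) : ℝ :=
  if (x \ y).card = 1 ∧ (y \ x).card = 1 then 1 / (2 * (n : ℝ) ^ 2) else 0

/-- Transition matrix of the Dyck random transposition chain. -/
noncomputable def dyckP (n : ℕ) (x y : Finset ℕ) : ℝ :=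
  if x = y then 1 - ∑ z ∈ dyck n, dyckStep n x z else dyckStep n x y

/-- The uniform stationary distribution `π(x) = 1/C_n` on `𝓓(n)`. -/
noncomputable def dyckPi (n : ℕ) : ℝ := ((dyck n).card : ℝ)⁻¹

/-- The Dirichlet form `𝓔(f,f)` of the Dyck random transposition chain. -/
noncomputable def dyckDirichlet (n : ℕ) (f : Finset ℕ → ℝ) : ℝ :=
  (1 / 2) * ∑ x ∈ dyck n, ∑ y ∈ dyck n, (f x - f y) ^ 2 * dyckP n x y * dyckPi n

/-- The variance `Var_π(f)` with respect to the uniform distribution on `𝓓(n)`. -/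
noncomputable def dyckVar (n : ℕ) (f : Finset ℕ → ℝ) : ℝ :=
  (∑ x ∈ dyck n, f x ^ 2 * dyckPi n) - (∑ x ∈ dyck n, f x * dyckPi n) ^ 2

/-- The number of down-steps at even indices of the Dyck path with up-step set `S`. -/
noncomputable def evenDownSteps (n : ℕ) (S : Finset ℕ) : ℝ :=
  (((Finset.Icc 1 (2 * n)) \ S).filter (fun i => Even i)).card

/-!
Let `f` be the number of down-steps at even indices. A Dyck path starts with an up-step and ends
with a down-step; pairing the remaining steps as `(2i, 2i + 1)` for `1 ≤ i < n` gives
`f = (n + 1) / 2 + (1 / 2) ∑ σᵢ`, where `σᵢ` is `-1`, `1` or `0` according to whether the `i`-th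
pair is a peak, a valley or flat. After step `2i - 1` a Dyck path has height at least `1`, so
swapping the steps `2i` and `2i + 1` is an involution of `𝓓(n)`. It negates `σᵢ` and fixes every
other `σⱼ`. Hence the `σᵢ` are centred and orthogonal, and `Var f = (1 / 4) ∑ 𝔼 σᵢ²`. Inserting a
peak injects `𝓓(n - 1)` into the paths with a peak at pair `i`, and the swap turns peaks into
valleys, so `𝔼 σᵢ² ≥ 2 C_{n-1} / C_n ≥ 1 / 2` and `Var f ≥ (n - 1) / 8`.

On the other side, a path has at most `n²` neighbours, each reached with probability `1 / (2n²)`,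
and `f` changes by at most `1` along a transition. Hence `𝓔(f,f) ≤ 1 / 4 ≤ (4 / n) Var f`.
-/

section

open scoped BigOperators

variable {m n p k : ℕ} {x y : Finset ℕ} {f g : Finset ℕ → ℝ}

/-! ### Dyck paths through prefix counts -/

/-- The number of up-steps among the first `k` steps of the path with up-step set `x`. -/
noncomputable def upCount (x : Finset ℕ) (k : ℕ) : ℕ := (x ∩ Finset.Icc 1 k).card

@[simp] lemma upCount_zero (x : Finset ℕ) : upCount x 0 = 0 := by simp [upCount]

lemma upCount_succ (x : Finset ℕ) (k : ℕ) :
    upCount x (k + 1) = upCount x k + if k + 1 ∈ x then 1 else 0 := by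
  rw [upCount, ← Finset.insert_Icc_right_eq_Icc_add_one (by omega)]
  split_ifs with h
  · rw [Finset.inter_insert_of_mem h, Finset.card_insert_of_notMem (by simp), upCount]
  · rw [Finset.inter_insert_of_notMem h, upCount, add_zero]

lemma upCount_le (x : Finset ℕ) (k : ℕ) : upCount x k ≤ k :=
  (Finset.card_le_card Finset.inter_subset_right).trans (by simp)

lemma upCount_congr (h : ∀ j ∈ Finset.Icc 1 k, j ∈ x ↔ j ∈ y) : upCount x k = upCount y k := by
  refine congrArg Finset.card (Finset.ext fun j => ?_)
  rw [Finset.mem_inter, Finset.mem_inter]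
  exact and_congr_left (h j)

lemma upCount_of_subset (h : x ⊆ Finset.Icc 1 k) : upCount x k = x.card := by
  rw [upCount, Finset.inter_eq_left.2 h]

lemma mem_dyck : x ∈ dyck n ↔
    x ⊆ Finset.Icc 1 (2 * n) ∧ upCount x (2 * n) = n ∧ ∀ k ≤ 2 * n, k ≤ 2 * upCount x k := by
  simp only [dyck, Finset.mem_filter, Finset.mem_powerset]
  refine and_congr_right fun hsub => and_congr (by rw [upCount_of_subset hsub])
    ⟨fun h k hk => ?_, fun h k hk => h k (Finset.mem_Icc.1 hk).2⟩
  rcases Nat.eq_zero_or_pos k with rfl | hk0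
  · exact Nat.zero_le _
  · exact h k (Finset.mem_Icc.2 ⟨hk0, hk⟩)

lemma one_mem_of_mem_dyck (hx : x ∈ dyck (m + 1)) : 1 ∈ x := by
  have hle := (mem_dyck.1 hx).2.2 1 (by omega)
  by_contra hnot
  simp [upCount_succ, hnot] at hle

lemma last_notMem_of_mem_dyck (hx : x ∈ dyck (m + 1)) : 2 * m + 2 ∉ x := by
  obtain ⟨-, hcard, hpre⟩ := mem_dyck.1 hx
  have hle := hpre (2 * m + 1) (by omega)
  intro hmem
  rw [show 2 * (m + 1) = 2 * m + 1 + 1 by ring, upCount_succ, if_pos hmem] at hcard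
  omega

/-! ### Enumeration by Catalan numbers -/

/-- The word of the first `N` steps of the path with up-step set `x`. It translates the up-step
sets of `dyck` into Mathlib's `DyckWord`s; the entry with list index `i` is step `i + 1`. -/
noncomputable def stepWord (N : ℕ) (x : Finset ℕ) : List DyckStep :=
  (List.range N).map fun i => if i + 1 ∈ x then .U else .D

lemma take_stepWord {N : ℕ} (hk : k ≤ N) (x : Finset ℕ) :
    (stepWord N x).take k = stepWord k x := by
  rw [stepWord, ← List.map_take, List.take_range, min_eq_left hk, stepWord]

lemma stepWord_succ (N : ℕ) (x : Finset ℕ) :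
    stepWord (N + 1) x = stepWord N x ++ [if N + 1 ∈ x then .U else .D] := by
  simp [stepWord, List.range_succ]

lemma count_U_stepWord (N : ℕ) (x : Finset ℕ) : (stepWord N x).count .U = upCount x N := by
  induction N with
  | zero => simp [stepWord]
  | succ N ih =>
    rw [stepWord_succ, List.count_append, ih, upCount_succ]
    split_ifs <;> simp

lemma count_D_stepWord (N : ℕ) (x : Finset ℕ) : (stepWord N x).count .D = N - upCount x N := by
  induction N with
  | zero => simp [stepWord]
  | succ N ih =>
    rw [stepWord_succ, List.count_append, ih, upCount_succ]
    have := upCount_le x N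
    split_ifs
    · simp
    · simp only [List.count_cons_self, List.count_nil]
      omega

lemma mem_dyck_iff_stepWord (hx : x ⊆ Finset.Icc 1 (2 * n)) :
    x ∈ dyck n ↔ (stepWord (2 * n) x).count .U = (stepWord (2 * n) x).count .D ∧
      ∀ k, ((stepWord (2 * n) x).take k).count .D ≤ ((stepWord (2 * n) x).take k).count .U := by
  have hle := upCount_le x (2 * n)
  have hcard : upCount x (2 * n) = n ↔ upCount x (2 * n) = 2 * n - upCount x (2 * n) := by omega
  rw [mem_dyck, and_iff_right hx, count_U_stepWord, count_D_stepWord]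
  refine and_congr hcard ⟨fun hpre k => ?_, fun hpre k hk => ?_⟩
  · rcases le_total k (2 * n) with hk | hk
    · have := hpre k hk
      rw [take_stepWord hk, count_U_stepWord, count_D_stepWord]
      omega
    · have := hpre (2 * n) le_rfl
      rw [List.take_of_length_le (by simpa [stepWord] using hk), count_U_stepWord,
        count_D_stepWord]
      omega
  · have := hpre k
    rw [take_stepWord hk, count_U_stepWord, count_D_stepWord] at this
    omega

/-- The `DyckWord` of a path given by its up-step set. -/
noncomputable def dyckWordOfMem (hx : x ∈ dyck n) : DyckWord where
  toList := stepWord (2 * n) x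
  count_U_eq_count_D := ((mem_dyck_iff_stepWord (mem_dyck.1 hx).1).1 hx).1
  count_D_le_count_U := ((mem_dyck_iff_stepWord (mem_dyck.1 hx).1).1 hx).2

lemma semilength_dyckWordOfMem (hx : x ∈ dyck n) : (dyckWordOfMem hx).semilength = n :=
  (count_U_stepWord _ _).trans (mem_dyck.1 hx).2.1

lemma stepWord_injOn (N : ℕ) : Set.InjOn (stepWord N) {x | x ⊆ Finset.Icc 1 N} := by
  intro x hx y hy hxy
  have hiff : ∀ i < N, i + 1 ∈ x ↔ i + 1 ∈ y := by
    intro i hi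
    have hget := congrArg (fun l => l[i]?) hxy
    simp only [stepWord, List.getElem?_map, List.getElem?_range hi, Option.map_some] at hget
    by_cases hix : i + 1 ∈ x <;> by_cases hiy : i + 1 ∈ y <;> simp_all
  ext j
  by_cases hj : j ∈ Finset.Icc 1 N
  · obtain ⟨i, rfl⟩ := Nat.exists_eq_add_of_le' (Finset.mem_Icc.1 hj).1
    exact hiff i (Finset.mem_Icc.1 hj).2
  · exact iff_of_false (fun h => hj (hx h)) (fun h => hj (hy h))

lemma exists_stepWord_eq (l : List DyckStep) :
    ∃ x ⊆ Finset.Icc 1 l.length, stepWord l.length x = l := by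
  refine ⟨(Finset.Icc 1 l.length).filter fun j => l[j - 1]? = some .U,
    Finset.filter_subset _ _, List.ext_getElem (by simp [stepWord]) fun i _ hi => ?_⟩
  rcases l[i].dichotomy with h | h <;> simp [stepWord, hi, h]

theorem card_dyck (n : ℕ) : (dyck n).card = catalan n := by
  rw [← DyckWord.card_dyckWord_semilength_eq_catalan, ← Finset.card_univ]
  refine Finset.card_bij (fun x hx => ⟨dyckWordOfMem hx, semilength_dyckWordOfMem hx⟩)
    (fun _ _ => Finset.mem_univ _) (fun x hx y hy hxy => ?_) fun ⟨w, hw⟩ _ => ?_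
  · exact stepWord_injOn (2 * n) (mem_dyck.1 hx).1 (mem_dyck.1 hy).1
      (congrArg (fun w => w.1.toList) hxy)
  · obtain ⟨x, hsub, hword⟩ := exists_stepWord_eq w.toList
    rw [← w.two_mul_semilength_eq_length, hw] at hsub hword
    have hx : x ∈ dyck n := (mem_dyck_iff_stepWord hsub).2
      (by rw [hword]; exact ⟨w.count_U_eq_count_D, w.count_D_le_count_U⟩)
    exact ⟨x, hx, Subtype.ext (DyckWord.ext hword)⟩

lemma catalan_pos (n : ℕ) : 0 < catalan n :=
  Nat.pos_of_mul_pos_left ((succ_mul_catalan_eq_centralBinom n).symm ▸ n.centralBinom_pos)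

lemma catalan_succ_le_four_mul (n : ℕ) : catalan (n + 1) ≤ 4 * catalan n := by
  have hrec : (n + 1) * ((n + 2) * catalan (n + 1)) = (n + 1) * (2 * (2 * n + 1) * catalan n) := by
    rw [succ_mul_catalan_eq_centralBinom (n + 1), Nat.succ_mul_centralBinom_succ,
      ← succ_mul_catalan_eq_centralBinom n]
    ring
  have := Nat.eq_of_mul_eq_mul_left n.succ_pos hrec
  nlinarith

lemma dyck_nonempty (n : ℕ) : (dyck n).Nonempty :=
  Finset.card_pos.1 (card_dyck n ▸ catalan_pos n)

/-! ### Swapping two consecutive steps -/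

/-- The path obtained by swapping the steps `p` and `p + 1`. -/
noncomputable def swapSteps (p : ℕ) (x : Finset ℕ) : Finset ℕ :=
  x.map (Equiv.swap p (p + 1)).toEmbedding

lemma mem_swapSteps {j : ℕ} : j ∈ swapSteps p x ↔ Equiv.swap p (p + 1) j ∈ x := by
  rw [swapSteps, Finset.mem_map_equiv, Equiv.symm_swap]

@[simp] lemma swapSteps_swapSteps (p : ℕ) (x : Finset ℕ) : swapSteps p (swapSteps p x) = x := by
  ext j
  simp [mem_swapSteps]

lemma swapSteps_Icc (hp : p ≠ 0) (hk : k ≠ p) :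
    swapSteps p (Finset.Icc 1 k) = Finset.Icc 1 k := by
  ext j
  simp only [mem_swapSteps, Equiv.swap_apply_def, Finset.mem_Icc]
  split_ifs <;> omega

lemma upCount_swapSteps (hp : p ≠ 0) (hk : k ≠ p) (x : Finset ℕ) :
    upCount (swapSteps p x) k = upCount x k := by
  rw [upCount, ← swapSteps_Icc hp hk, swapSteps, swapSteps, ← Finset.map_inter, Finset.card_map,
    upCount]

-- For even `p` the height after step `p - 1` is odd, hence at least `1`, so that either order of
-- the next two steps keeps the path nonnegative.
lemma swapSteps_mem_dyck (hp : Even p) (hp0 : p ≠ 0) (hpn : p < 2 * n) (hx : x ∈ dyck n) :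
    swapSteps p x ∈ dyck n := by
  obtain ⟨hsub, hcard, hpre⟩ := mem_dyck.1 hx
  refine mem_dyck.2 ⟨?_, ?_, fun k hk => ?_⟩
  · rw [← swapSteps_Icc hp0 hpn.ne', swapSteps, swapSteps]
    exact Finset.map_subset_map.2 hsub
  · rw [upCount_swapSteps hp0 hpn.ne', hcard]
  · rcases eq_or_ne k p with rfl | hkp
    · obtain ⟨q, rfl⟩ := Nat.exists_eq_add_one_of_ne_zero hp0
      have hq := hpre q (by omega)
      rw [← upCount_swapSteps (p := q + 1) hp0 (by omega)] at hq
      have := upCount_succ (swapSteps (q + 1) x) q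
      obtain ⟨r, hr⟩ := hp
      omega
    · rw [upCount_swapSteps hp0 hkp]
      exact hpre k hk

lemma expect_swapSteps (hp : Even p) (hp0 : p ≠ 0) (hpn : p < 2 * n) (g : Finset ℕ → ℝ) :
    𝔼 x ∈ dyck n, g (swapSteps p x) = 𝔼 x ∈ dyck n, g x :=
  Finset.expect_nbij' (swapSteps p) (swapSteps p)
    (fun _ => swapSteps_mem_dyck hp hp0 hpn) (fun _ => swapSteps_mem_dyck hp hp0 hpn)
    (fun x _ => swapSteps_swapSteps p x) (fun x _ => swapSteps_swapSteps p x) fun _ _ => rfl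

/-! ### Inserting a peak -/

/-- The path obtained by inserting an up-step and a down-step as the new steps `p` and `p + 1`. -/
noncomputable def insertPeak (p : ℕ) (y : Finset ℕ) : Finset ℕ :=
  insert p (y.image fun j => if j < p then j else j + 2)

lemma mem_insertPeak_of_lt {j : ℕ} (hj : j < p) : j ∈ insertPeak p y ↔ j ∈ y := by
  simp only [insertPeak, Finset.mem_insert, Finset.mem_image, hj.ne, false_or]
  refine ⟨fun ⟨a, ha, hja⟩ => ?_, fun h => ⟨j, h, if_pos hj⟩⟩
  split_ifs at hja
  · exact hja ▸ ha
  · omega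

lemma self_mem_insertPeak (p : ℕ) (y : Finset ℕ) : p ∈ insertPeak p y :=
  Finset.mem_insert_self _ _

lemma succ_notMem_insertPeak (p : ℕ) (y : Finset ℕ) : p + 1 ∉ insertPeak p y := by
  simp only [insertPeak, Finset.mem_insert, Finset.mem_image, not_or, not_exists, not_and]
  refine ⟨by omega, fun a _ => ?_⟩
  split_ifs <;> omega

lemma add_two_mem_insertPeak {j : ℕ} (hj : p ≤ j) : j + 2 ∈ insertPeak p y ↔ j ∈ y := by
  simp only [insertPeak, Finset.mem_insert, Finset.mem_image]
  refine ⟨?_, fun h => .inr ⟨j, h, if_neg hj.not_gt⟩⟩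
  rintro (h | ⟨a, ha, hja⟩)
  · omega
  · split_ifs at hja
    · omega
    · rwa [← Nat.add_right_cancel hja]

lemma insertPeak_injective (p : ℕ) : Function.Injective (insertPeak p) := by
  intro x y h
  ext j
  rcases lt_or_ge j p with hj | hj
  · rw [← mem_insertPeak_of_lt hj, h, mem_insertPeak_of_lt hj]
  · rw [← add_two_mem_insertPeak hj, h, add_two_mem_insertPeak hj]

lemma upCount_insertPeak_of_lt (hk : k < p) (y : Finset ℕ) :
    upCount (insertPeak p y) k = upCount y k :=
  upCount_congr fun _ hj => mem_insertPeak_of_lt ((Finset.mem_Icc.1 hj).2.trans_lt hk)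

lemma upCount_insertPeak_self (p : ℕ) (y : Finset ℕ) :
    upCount (insertPeak (p + 1) y) (p + 1) = upCount y p + 1 := by
  rw [upCount_succ, if_pos (self_mem_insertPeak _ _), upCount_insertPeak_of_lt p.lt_succ_self]

lemma upCount_insertPeak_add_two (hk : p ≤ k) (y : Finset ℕ) :
    upCount (insertPeak (p + 1) y) (k + 2) = upCount y k + 1 := by
  induction k, hk using Nat.le_induction with
  | base => rw [upCount_succ, if_neg (succ_notMem_insertPeak _ _), upCount_insertPeak_self]
  | succ k hk ih =>
    rw [upCount_succ, ih, upCount_succ y,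
      if_congr (add_two_mem_insertPeak (Nat.succ_le_succ hk)) rfl rfl]
    ring

lemma insertPeak_mem_dyck (hp : p ≤ 2 * m) (hy : y ∈ dyck m) :
    insertPeak (p + 1) y ∈ dyck (m + 1) := by
  obtain ⟨hsub, hcard, hpre⟩ := mem_dyck.1 hy
  refine mem_dyck.2 ⟨?_, ?_, fun k hk => ?_⟩
  · simp only [insertPeak, Finset.insert_subset_iff, Finset.image_subset_iff, Finset.mem_Icc]
    refine ⟨by omega, fun j hj => ?_⟩
    have := Finset.mem_Icc.1 (hsub hj)
    split_ifs <;> omega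
  · rw [show 2 * (m + 1) = 2 * m + 2 by ring, upCount_insertPeak_add_two hp, hcard]
  · rcases lt_trichotomy k (p + 1) with hkp | rfl | hkp
    · rw [upCount_insertPeak_of_lt hkp]
      exact hpre k (by omega)
    · have := hpre p hp
      rw [upCount_insertPeak_self]
      omega
    · obtain ⟨l, rfl⟩ := Nat.exists_eq_add_of_le' (show 2 ≤ k by omega)
      have := hpre l (by omega)
      rw [upCount_insertPeak_add_two (by omega)]
      omega

lemma catalan_le_card_filter_peak (hp : p ≤ 2 * m) :
    catalan m ≤ ((dyck (m + 1)).filter fun x => p + 1 ∈ x ∧ p + 2 ∉ x).card := by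
  rw [← card_dyck]
  refine Finset.card_le_card_of_injOn (insertPeak (p + 1)) (fun y hy => ?_)
    (insertPeak_injective _).injOn
  exact Finset.mem_filter.2 ⟨insertPeak_mem_dyck hp hy, self_mem_insertPeak _ _,
    succ_notMem_insertPeak _ _⟩

/-! ### Step differences -/

/-- The increment `𝟙[p + 1 ∈ x] - 𝟙[p ∈ x]`: it is `-1` if the steps `p` and `p + 1` form a peak,
`1` if they form a valley, and `0` if they are equal. -/
noncomputable def stepDiff (p : ℕ) (x : Finset ℕ) : ℝ :=
  (if p + 1 ∈ x then 1 else 0) - if p ∈ x then 1 else 0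

lemma stepDiff_swapSteps_self (p : ℕ) (x : Finset ℕ) :
    stepDiff p (swapSteps p x) = -stepDiff p x := by
  simp [stepDiff, mem_swapSteps]

lemma stepDiff_swapSteps_of_disjoint {q : ℕ} (h : p + 1 < q ∨ q + 1 < p) (x : Finset ℕ) :
    stepDiff q (swapSteps p x) = stepDiff q x := by
  have hq : Equiv.swap p (p + 1) q = q := Equiv.swap_apply_of_ne_of_ne (by omega) (by omega)
  have hq' : Equiv.swap p (p + 1) (q + 1) = q + 1 :=
    Equiv.swap_apply_of_ne_of_ne (by omega) (by omega)
  simp only [stepDiff, mem_swapSteps, hq, hq']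

lemma expect_stepDiff (hp : Even p) (hp0 : p ≠ 0) (hpn : p < 2 * n) :
    𝔼 x ∈ dyck n, stepDiff p x = 0 := by
  have h := expect_swapSteps hp hp0 hpn (stepDiff p)
  simp only [stepDiff_swapSteps_self, Finset.expect_neg_distrib] at h
  linarith

lemma expect_stepDiff_mul_stepDiff {q : ℕ} (hp : Even p) (hp0 : p ≠ 0) (hpn : p < 2 * n)
    (hpq : p + 1 < q ∨ q + 1 < p) : 𝔼 x ∈ dyck n, stepDiff p x * stepDiff q x = 0 := by
  have h := expect_swapSteps hp hp0 hpn fun x => stepDiff p x * stepDiff q x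
  simp only [stepDiff_swapSteps_self, stepDiff_swapSteps_of_disjoint hpq, neg_mul,
    Finset.expect_neg_distrib] at h
  linarith

lemma stepDiff_sq (p : ℕ) (x : Finset ℕ) :
    stepDiff p x ^ 2 = (if p ∈ x ∧ p + 1 ∉ x then 1 else 0) +
      if p ∈ swapSteps p x ∧ p + 1 ∉ swapSteps p x then 1 else 0 := by
  simp only [mem_swapSteps, Equiv.swap_apply_left, Equiv.swap_apply_right]
  by_cases hp : p ∈ x <;> by_cases hp' : p + 1 ∈ x <;> simp [stepDiff, hp, hp']

lemma half_le_expect_stepDiff_sq (hp : Even p) (hp0 : p ≠ 0) (hpm : p < 2 * (m + 1)) :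
    1 / 2 ≤ 𝔼 x ∈ dyck (m + 1), stepDiff p x ^ 2 := by
  obtain ⟨q, rfl⟩ := Nat.exists_eq_add_one_of_ne_zero hp0
  have hpeak : (1 : ℝ) / 4 ≤
      𝔼 x ∈ dyck (m + 1), if q + 1 ∈ x ∧ q + 1 + 1 ∉ x then 1 else 0 := by
    have hC : (0 : ℝ) < catalan (m + 1) := mod_cast catalan_pos (m + 1)
    have hratio : (catalan (m + 1) : ℝ) ≤ 4 * catalan m := mod_cast catalan_succ_le_four_mul m
    have hle : (catalan m : ℝ) ≤ _ :=
      Nat.cast_le.2 (catalan_le_card_filter_peak (m := m) (p := q) (by omega))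
    rw [Finset.expect_eq_sum_div_card, Finset.sum_boole, card_dyck, le_div_iff₀ hC]
    linarith
  simp only [stepDiff_sq, Finset.expect_add_distrib]
  rw [expect_swapSteps hp hp0 hpm fun x => if q + 1 ∈ x ∧ q + 1 + 1 ∉ x then 1 else 0]
  linarith

/-! ### Down-steps at even indices -/

lemma evenDownSteps_succ (n : ℕ) (x : Finset ℕ) :
    evenDownSteps (n + 1) x = evenDownSteps n x + (1 - if 2 * n + 2 ∈ x then 1 else 0) := by
  have hsum (n : ℕ) : evenDownSteps n x =
      ∑ j ∈ Finset.Icc 1 (2 * n), if Even j ∧ j ∉ x then (1 : ℝ) else 0 := by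
    rw [Finset.sum_boole, evenDownSteps, Finset.sdiff_eq_filter, Finset.filter_filter]
    simp only [and_comm]
  have hodd : ¬Even (2 * n + 1) := Nat.not_even_iff_odd.2 (odd_two_mul_add_one n)
  have heven : Even (2 * n + 2) := by simp [parity_simps]
  rw [hsum, hsum, show 2 * (n + 1) = 2 * n + 1 + 1 by ring, Finset.sum_Icc_succ_top (by omega),
    Finset.sum_Icc_succ_top (by omega)]
  by_cases h : 2 * n + 2 ∈ x <;> simp [hodd, heven, h]

lemma two_mul_evenDownSteps_add_upCount (n : ℕ) (x : Finset ℕ) :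
    2 * evenDownSteps n x + upCount x (2 * n) = 2 * n +
      ∑ i ∈ Finset.range n,
        ((if 2 * i + 1 ∈ x then 1 else 0) - if 2 * i + 2 ∈ x then 1 else 0 : ℝ) := by
  induction n with
  | zero => simp [evenDownSteps]
  | succ n ih =>
    rw [evenDownSteps_succ, show 2 * (n + 1) = 2 * n + 1 + 1 by ring, upCount_succ, upCount_succ,
      Finset.sum_range_succ]
    push_cast
    linarith

lemma evenDownSteps_eq_add_sum_stepDiff (hx : x ∈ dyck (m + 1)) :
    evenDownSteps (m + 1) x =
      (m + 2) / 2 + 1 / 2 * ∑ i ∈ Finset.range m, stepDiff (2 * i + 2) x := by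
  have h := two_mul_evenDownSteps_add_upCount (m + 1) x
  rw [(mem_dyck.1 hx).2.1, Finset.sum_sub_distrib, Finset.sum_range_succ', Finset.sum_range_succ,
    if_pos (one_mem_of_mem_dyck hx), if_neg (last_notMem_of_mem_dyck hx)] at h
  simp only [mul_add, mul_one, add_assoc, Nat.reduceAdd] at h
  simp only [stepDiff, Finset.sum_sub_distrib, add_assoc, Nat.reduceAdd]
  push_cast at h
  linarith

lemma evenDownSteps_le_add_card_sdiff (n : ℕ) (x y : Finset ℕ) :
    evenDownSteps n x ≤ evenDownSteps n y + (y \ x).card := by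
  have hsub : (Finset.Icc 1 (2 * n) \ x).filter (fun i => Even i) ⊆
      (Finset.Icc 1 (2 * n) \ y).filter (fun i => Even i) ∪ y \ x := by
    intro j
    simp only [Finset.mem_filter, Finset.mem_sdiff, Finset.mem_union]
    tauto
  unfold evenDownSteps
  exact mod_cast (Finset.card_le_card hsub).trans (Finset.card_union_le _ _)

/-! ### Variance -/

lemma dyckVar_eq_expect (n : ℕ) (f : Finset ℕ → ℝ) :
    dyckVar n f = 𝔼 x ∈ dyck n, f x ^ 2 - (𝔼 x ∈ dyck n, f x) ^ 2 := by
  simp only [dyckVar, dyckPi, Finset.expect_eq_sum_div_card, div_eq_mul_inv, Finset.sum_mul]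

lemma dyckVar_congr (h : ∀ x ∈ dyck n, f x = g x) : dyckVar n f = dyckVar n g := by
  rw [dyckVar_eq_expect, dyckVar_eq_expect, Finset.expect_congr rfl h,
    Finset.expect_congr rfl fun x hx => by rw [h x hx]]

lemma dyckVar_const_add_mul (n : ℕ) (a b : ℝ) (f : Finset ℕ → ℝ) :
    dyckVar n (fun x => a + b * f x) = b ^ 2 * dyckVar n f := by
  have hsq (x) : (a + b * f x) ^ 2 = a ^ 2 + 2 * a * b * f x + b ^ 2 * f x ^ 2 := by ring
  simp only [dyckVar_eq_expect, hsq, Finset.expect_add_distrib, ← Finset.mul_expect,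
    Finset.expect_const (dyck_nonempty n)]
  ring

lemma dyckVar_nonneg (n : ℕ) (f : Finset ℕ → ℝ) : 0 ≤ dyckVar n f := by
  have h := Finset.expect_mul_sq_le_sq_mul_sq (dyck n) f 1
  simp only [Pi.one_apply, mul_one, one_pow, Finset.expect_const (dyck_nonempty n)] at h
  rw [dyckVar_eq_expect]
  exact sub_nonneg.2 h

lemma exists_ne_of_dyckVar_pos (h : 0 < dyckVar n f) :
    ∃ x ∈ dyck n, ∃ y ∈ dyck n, f x ≠ f y := by
  by_contra! hconst
  obtain ⟨z, hz⟩ := dyck_nonempty n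
  have hzero : dyckVar n f = 0 := by
    rw [dyckVar_congr fun x hx => hconst x hx z hz, dyckVar_eq_expect,
      Finset.expect_const ⟨z, hz⟩, Finset.expect_const ⟨z, hz⟩, sub_self]
  exact h.ne' hzero

lemma dyckVar_sum_of_orthogonal {ι : Type*} (s : Finset ι) (g : ι → Finset ℕ → ℝ)
    (hmean : ∀ i ∈ s, 𝔼 x ∈ dyck n, g i x = 0)
    (horth : ∀ i ∈ s, ∀ j ∈ s, j ≠ i → 𝔼 x ∈ dyck n, g i x * g j x = 0) :
    dyckVar n (fun x => ∑ i ∈ s, g i x) = ∑ i ∈ s, 𝔼 x ∈ dyck n, g i x ^ 2 := by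
  rw [dyckVar_eq_expect, Finset.expect_sum_comm, Finset.sum_eq_zero hmean, zero_pow two_ne_zero,
    sub_zero]
  simp only [sq (Finset.sum _ _), Finset.sum_mul_sum, Finset.expect_sum_comm]
  refine Finset.sum_congr rfl fun i hi => ?_
  rw [Finset.sum_eq_single_of_mem i hi (horth i hi)]
  simp only [sq]

theorem le_dyckVar_evenDownSteps (m : ℕ) :
    (m : ℝ) / 8 ≤ dyckVar (m + 1) (evenDownSteps (m + 1)) := by
  have heven (i : ℕ) : Even (2 * i + 2) := by simp [parity_simps]
  have hlt {i : ℕ} (hi : i ∈ Finset.range m) : 2 * i + 2 < 2 * (m + 1) := by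
    have := Finset.mem_range.1 hi
    omega
  have hsum : (m : ℝ) / 2 ≤
      ∑ i ∈ Finset.range m, 𝔼 x ∈ dyck (m + 1), stepDiff (2 * i + 2) x ^ 2 := by
    have := Finset.card_nsmul_le_sum (Finset.range m) _ _ fun i hi =>
      half_le_expect_stepDiff_sq (heven i) (by omega) (hlt hi)
    rw [Finset.card_range, nsmul_eq_mul] at this
    linarith
  rw [dyckVar_congr fun x => evenDownSteps_eq_add_sum_stepDiff, dyckVar_const_add_mul,
    dyckVar_sum_of_orthogonal _ (fun i => stepDiff (2 * i + 2))
      (fun i hi => expect_stepDiff (heven i) (by omega) (hlt hi))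
      fun i hi j _ hji => expect_stepDiff_mul_stepDiff (heven i) (by omega) (hlt hi) (by omega)]
  linarith

/-! ### The Dirichlet form -/

lemma dyckDirichlet_eq_expect (n : ℕ) (f : Finset ℕ → ℝ) :
    dyckDirichlet n f =
      1 / 2 * 𝔼 x ∈ dyck n, ∑ y ∈ dyck n, (f x - f y) ^ 2 * dyckStep n x y := by
  have hterm (x y) : (f x - f y) ^ 2 * dyckP n x y = (f x - f y) ^ 2 * dyckStep n x y := by
    rcases eq_or_ne x y with rfl | hxy
    · simp
    · rw [dyckP, if_neg hxy]
  simp only [dyckDirichlet, dyckPi, hterm, Finset.expect_eq_sum_div_card, div_eq_mul_inv,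
    Finset.sum_mul]

lemma dyckStep_nonneg (n : ℕ) (x y : Finset ℕ) : 0 ≤ dyckStep n x y := by
  unfold dyckStep
  positivity

lemma dyckDirichlet_nonneg (n : ℕ) (f : Finset ℕ → ℝ) : 0 ≤ dyckDirichlet n f := by
  rw [dyckDirichlet_eq_expect]
  exact mul_nonneg (by norm_num) (Finset.expect_nonneg fun x _ => Finset.sum_nonneg fun y _ =>
    mul_nonneg (sq_nonneg _) (dyckStep_nonneg n x y))

lemma exists_eq_insert_erase_of_card_sdiff (hxy : (x \ y).card = 1) (hyx : (y \ x).card = 1) :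
    ∃ a ∈ x, ∃ b ∈ y \ x, insert b (x.erase a) = y := by
  obtain ⟨a, ha⟩ := Finset.card_eq_one.1 hxy
  obtain ⟨b, hb⟩ := Finset.card_eq_one.1 hyx
  refine ⟨a, (Finset.mem_sdiff.1 (ha ▸ Finset.mem_singleton_self a)).1, b,
    hb ▸ Finset.mem_singleton_self b, ?_⟩
  rw [Finset.insert_eq, Finset.erase_eq, ← ha, ← hb, sdiff_sdiff_right_self,
    Finset.inf_eq_inter, Finset.inter_comm, Finset.sdiff_union_inter]

lemma card_filter_exchange_le (hx : x ∈ dyck n) :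
    ((dyck n).filter fun y => (x \ y).card = 1 ∧ (y \ x).card = 1).card ≤ n ^ 2 := by
  obtain ⟨hsub, hcard, -⟩ := mem_dyck.1 hx
  rw [upCount_of_subset hsub] at hcard
  have himage : ((dyck n).filter fun y => (x \ y).card = 1 ∧ (y \ x).card = 1) ⊆
      (x ×ˢ (Finset.Icc 1 (2 * n) \ x)).image fun ab => insert ab.2 (x.erase ab.1) := by
    intro y hy
    obtain ⟨hy, hxy, hyx⟩ := Finset.mem_filter.1 hy
    obtain ⟨a, ha, b, hb, rfl⟩ := exists_eq_insert_erase_of_card_sdiff hxy hyx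
    exact Finset.mem_image.2 ⟨(a, b), Finset.mk_mem_product ha
      (Finset.sdiff_subset_sdiff (mem_dyck.1 hy).1 subset_rfl hb), rfl⟩
  calc _ ≤ (x ×ˢ (Finset.Icc 1 (2 * n) \ x)).card :=
        (Finset.card_le_card himage).trans Finset.card_image_le
    _ = n ^ 2 := by
        rw [Finset.card_product, Finset.card_sdiff_of_subset hsub, hcard, Nat.card_Icc, sq]
        congr 1
        omega

lemma sum_dyckStep_le_half (hx : x ∈ dyck n) : ∑ y ∈ dyck n, dyckStep n x y ≤ 1 / 2 := by
  have hcard : (((dyck n).filter fun y => (x \ y).card = 1 ∧ (y \ x).card = 1).card : ℝ) ≤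
      (n : ℝ) ^ 2 := mod_cast card_filter_exchange_le hx
  simp only [dyckStep]
  rw [← Finset.sum_filter, Finset.sum_const, nsmul_eq_mul]
  calc _ ≤ (n : ℝ) ^ 2 * (1 / (2 * (n : ℝ) ^ 2)) :=
        mul_le_mul_of_nonneg_right hcard (by positivity)
    _ = 1 / 2 * ((n : ℝ) ^ 2 / (n : ℝ) ^ 2) := by ring
    _ ≤ 1 / 2 := mul_le_of_le_one_right (by norm_num) (div_self_le_one _)

theorem dyckDirichlet_le_of_abs_sub_le {L : ℝ}
    (hf : ∀ x ∈ dyck n, ∀ y ∈ dyck n, (x \ y).card = 1 → (y \ x).card = 1 → |f x - f y| ≤ L) :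
    dyckDirichlet n f ≤ L ^ 2 / 4 := by
  have hterm {x y} (hx : x ∈ dyck n) (hy : y ∈ dyck n) :
      (f x - f y) ^ 2 * dyckStep n x y ≤ L ^ 2 * dyckStep n x y := by
    by_cases h : (x \ y).card = 1 ∧ (y \ x).card = 1
    · exact mul_le_mul_of_nonneg_right
        (sq_le_sq.2 ((hf x hx y hy h.1 h.2).trans (le_abs_self L))) (dyckStep_nonneg n x y)
    · simp [dyckStep, h]
  have hrow : ∀ x ∈ dyck n, ∑ y ∈ dyck n, (f x - f y) ^ 2 * dyckStep n x y ≤ L ^ 2 * (1 / 2) :=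
    fun x hx => calc
      _ ≤ L ^ 2 * ∑ y ∈ dyck n, dyckStep n x y := by
        rw [Finset.mul_sum]
        exact Finset.sum_le_sum fun y => hterm hx
      _ ≤ L ^ 2 * (1 / 2) := mul_le_mul_of_nonneg_left (sum_dyckStep_le_half hx) (sq_nonneg L)
  have := Finset.expect_le (dyck_nonempty n) hrow
  rw [dyckDirichlet_eq_expect]
  linarith

theorem dyckDirichlet_evenDownSteps_le (n : ℕ) : dyckDirichlet n (evenDownSteps n) ≤ 1 / 4 := by
  refine (dyckDirichlet_le_of_abs_sub_le (L := 1) fun x _ y _ hxy hyx => ?_).trans (by norm_num)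
  have hle := evenDownSteps_le_add_card_sdiff n x y
  have hge := evenDownSteps_le_add_card_sdiff n y x
  rw [hyx] at hle
  rw [hxy] at hge
  push_cast at hle hge
  rw [abs_sub_le_iff]
  exact ⟨by linarith, by linarith⟩

lemma sInf_dyckDirichlet_div_dyckVar_le {c : ℝ} (hvar : 0 < dyckVar n f)
    (h : dyckDirichlet n f ≤ c * dyckVar n f) :
    sInf {l : ℝ | ∃ g : Finset ℕ → ℝ, (∃ x ∈ dyck n, ∃ y ∈ dyck n, g x ≠ g y) ∧
      l = dyckDirichlet n g / dyckVar n g} ≤ c := by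
  refine csInf_le_of_le ⟨0, ?_⟩ ⟨f, exists_ne_of_dyckVar_pos hvar, rfl⟩
    ((div_le_iff₀ hvar).2 h)
  rintro _ ⟨g, -, rfl⟩
  exact div_nonneg (dyckDirichlet_nonneg n g) (dyckVar_nonneg n g)

end

/-- Upper bound on the spectral gap of the Dyck random transposition chain: the
statistic counting down-steps at even indices is non-constant and satisfies
`𝓔(f,f) ≤ (4/n)·Var_π(f)`; consequently the spectral gap
`λ = inf_g 𝓔(g,g)/Var_π(g)` (over non-constant `g`) is at most `4/n`. -/
theorem dyck_spectral_gap_upper (n : ℕ) (hn : 2 ≤ n) :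
    (∃ x ∈ dyck n, ∃ y ∈ dyck n, evenDownSteps n x ≠ evenDownSteps n y) ∧
    dyckDirichlet n (evenDownSteps n) ≤ (4 / (n : ℝ)) * dyckVar n (evenDownSteps n) ∧
    sInf {l : ℝ | ∃ g : Finset ℕ → ℝ,
        (∃ x ∈ dyck n, ∃ y ∈ dyck n, g x ≠ g y) ∧
        l = dyckDirichlet n g / dyckVar n g} ≤ 4 / (n : ℝ) := by
  obtain ⟨m, rfl⟩ := Nat.exists_eq_add_of_le' (show 1 ≤ n by omega)
  have hm : (1 : ℝ) ≤ m := mod_cast Nat.succ_le_succ_iff.1 hn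
  have hvar := le_dyckVar_evenDownSteps m
  have hpos : 0 < dyckVar (m + 1) (evenDownSteps (m + 1)) := by linarith
  have hdir : dyckDirichlet (m + 1) (evenDownSteps (m + 1)) ≤
      4 / ((m + 1 : ℕ) : ℝ) * dyckVar (m + 1) (evenDownSteps (m + 1)) := by
    refine (dyckDirichlet_evenDownSteps_le (m + 1)).trans ?_
    rw [div_mul_eq_mul_div, le_div_iff₀ (by positivity)]
    push_cast
    linarith
  exact ⟨exists_ne_of_dyckVar_pos hpos, hdir, sInf_dyckDirichlet_div_dyckVar_le hpos hdir⟩
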